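/- arXiv:1610.01689 — 2 statements merged into one kernel-verified Lean document; each statement's English description precedes it below -/
import Mathlib

section
/- Under the stated second-order growth hypotheses along the arithmetic progression n ≡ n_0 (mod N), let j' be an index minimizing ρ_j := (1/dim χ_j) · Σ_{g ∈ G, ord g = e_2} χ_j(g)·ε(g), and for each i set f_i'(g) := χ_i(g) − (dim χ_i / dim χ_{j'})·χ_{j'}(g) and S_i := Σ_{g ∈ G, ord g = e_2} f_i'(g)·ε(g). Then for every index i with S_i ≠ 0, the multiplicity m_i'(n) of the i-th irreducible representation in the non-free part of K_n satisfies m_i'(n) ~ (C(n,e_2)·exp(D(n)/e_2) / |G|) · S_i as n → ∞ with n ≡ n_0 (mod N). -/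
open CategoryTheory Filter Asymptotics
open scoped Topology BigOperators

theorem finrank_pos_of_simple_aux (G : Type) [Group G] [Fintype G] (V : FDRep ℂ G)
    (h : Simple V) : 0 < Module.finrank ℂ V := by
  rw [Module.finrank_pos_iff]
  by_contra hn
  rw [not_nontrivial_iff_subsingleton] at hn
  apply id_nonzero V
  ext x
  exact Subsingleton.elim _ _

/-- `G` is a finite group, `V 1, …, V s` a complete list of the pairwise
non-isomorphic irreducible complex representations of `G` with characters `χ i`, `c g n` an
integer-valued class function of `g` realized as the character of a representation `K n`, and
`m i n` the multiplicity of `V i` in `K n`.  `e2` is the least order of a non-identity element,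
`r1 n = min_j ⌊m_j(n)/dim χ_j⌋` is the free-part multiplicity and
`m' i n = m i n − r1 n · dim χ_i` the multiplicity of `V i` in the non-free part of `K n`.
Under the second-order growth hypotheses along the arithmetic progression `n ≡ n0 (mod N)`
(signs `ε` constant on conjugacy classes, `c g n = ε g · C(n,e2)·exp(D(n)/e2)·(1+o(1))` for
`ord g = e2`, `c g n = o(C(n,e2)·exp(D(n)/e2))` for `ord g > e2`, and
`C(n,e2)·exp(D(n)/e2) → ∞`), if `j'` minimizes
`ρ_j = (1/dim χ_j)·Σ_{ord g = e2} χ_j(g)·ε(g)`, and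
`S i = Σ_{ord g = e2} (χ_i(g) − (dim χ_i/dim χ_{j'})·χ_{j'}(g))·ε(g)` is nonzero, then
`m' i n ~ (C(n,e2)·exp(D(n)/e2)/|G|) · S i` along the progression. -/
theorem moonshine_nonfree_part_asymptotics
    (G : Type) [Group G] [Fintype G]
    (s : ℕ) (hs : 0 < s) (V : Fin s → FDRep ℂ G)
    (hsimple : ∀ i, Simple (V i))
    (hdistinct : ∀ i j, i ≠ j → IsEmpty (V i ≅ V j))
    (hcomplete : ∀ W : FDRep ℂ G, Simple W → ∃ i, Nonempty (W ≅ V i))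
    (c : G → ℕ → ℤ)
    (hclass : ∀ g h : G, IsConj g h → c g = c h)
    (K : ℕ → FDRep ℂ G)
    (hK : ∀ (n : ℕ) (g : G), (K n).character g = (c g n : ℂ))
    (m : Fin s → ℕ → ℕ)
    (hm : ∀ i n, (m i n : ℂ) =
      (Fintype.card G : ℂ)⁻¹ * ∑ g : G, (starRingEnd ℂ) ((V i).character g) * (c g n : ℂ))
    (e2 : ℕ) (he2 : IsLeast {k : ℕ | ∃ g : G, g ≠ 1 ∧ orderOf g = k} e2)
    (N : ℕ) (hN : 1 ≤ N) (n0 : ℕ)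
    (L : Filter ℕ) (hL : L = atTop ⊓ 𝓟 {n : ℕ | n % N = n0 % N})
    (ε : G → ℤ) (hε : ∀ g, ε g = 1 ∨ ε g = -1)
    (hεclass : ∀ g h : G, IsConj g h → ε g = ε h)
    (C : ℕ → ℕ → ℝ) (D : ℕ → ℝ)
    (hord2 : ∀ g : G, orderOf g = e2 →
      (fun n => (c g n : ℝ) - (ε g : ℝ) * (C n e2 * Real.exp (D n / (e2 : ℝ))))
        =o[L] fun n => C n e2 * Real.exp (D n / (e2 : ℝ)))
    (hhigher : ∀ g : G, e2 < orderOf g →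
      (fun n => (c g n : ℝ)) =o[L] fun n => C n e2 * Real.exp (D n / (e2 : ℝ)))
    (htop : Tendsto (fun n => C n e2 * Real.exp (D n / (e2 : ℝ))) L atTop)
    (r1 : ℕ → ℕ)
    (hr1 : ∀ n, r1 n = Finset.univ.inf'
      (Finset.univ_nonempty_iff.mpr (Fin.pos_iff_nonempty.mp hs))
      (fun j : Fin s => m j n / Module.finrank ℂ (V j)))
    (m' : Fin s → ℕ → ℤ)
    (hm' : ∀ i n, m' i n = (m i n : ℤ) - (r1 n : ℤ) * (Module.finrank ℂ (V i) : ℤ))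
    (ρ : Fin s → ℝ)
    (hρ : ∀ j, (ρ j : ℂ) = (Module.finrank ℂ (V j) : ℂ)⁻¹ *
      ∑ g ∈ Finset.univ.filter (fun g : G => orderOf g = e2),
        (V j).character g * (ε g : ℂ))
    (j' : Fin s) (hj' : ∀ j, ρ j' ≤ ρ j)
    (S : Fin s → ℝ)
    (hS : ∀ i, (S i : ℂ) =
      ∑ g ∈ Finset.univ.filter (fun g : G => orderOf g = e2),
        ((V i).character g -
          (Module.finrank ℂ (V i) : ℂ) / (Module.finrank ℂ (V j') : ℂ) *
            (V j').character g) * (ε g : ℂ))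
    (i : Fin s) (hSi : S i ≠ 0) :
    Tendsto
      (fun n => (m' i n : ℝ) /
        (C n e2 * Real.exp (D n / (e2 : ℝ)) / (Fintype.card G : ℝ) * S i))
      L (𝓝 1) := by
  classical
  set A : ℕ → ℝ := fun n => C n e2 * Real.exp (D n / (e2 : ℝ)) with hA
  have hd : ∀ j, 0 < Module.finrank ℂ (V j) := fun j =>
    finrank_pos_of_simple_aux G (V j) (hsimple j)
  have hdR : ∀ j, (0 : ℝ) < (Module.finrank ℂ (V j) : ℝ) := fun j => by exact_mod_cast hd j
  have hcard : (0 : ℝ) < (Fintype.card G : ℝ) := by exact_mod_cast Fintype.card_pos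
  have hApos : ∀ᶠ n in L, 0 < A n := htop.eventually_gt_atTop 0
  have he2one : e2 ≠ 1 := by
    obtain ⟨g, hg, hgo⟩ := he2.1
    intro h
    exact hg (orderOf_eq_one_iff.mp (hgo.trans h))
  -- the multiplicity written with real numbers
  have hmre : ∀ j n, (m j n : ℝ) = (Fintype.card G : ℝ)⁻¹ *
      ∑ g : G, ((V j).character g).re * (c g n : ℝ) := by
    intro j n
    have h := congrArg Complex.re (hm j n)
    have e1 : (Fintype.card G : ℂ)⁻¹ = (((Fintype.card G : ℝ)⁻¹ : ℝ) : ℂ) := by push_cast; rfl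
    rw [e1, Complex.re_ofReal_mul, Complex.natCast_re, Complex.re_sum] at h
    rw [h]
    congr 1
    refine Finset.sum_congr rfl fun g _ => ?_
    simp [Complex.mul_re]
  have hρre : ∀ j, ρ j * (Module.finrank ℂ (V j) : ℝ) =
      ∑ g : G, if orderOf g = e2 then ((V j).character g).re * (ε g : ℝ) else 0 := by
    intro j
    have h := congrArg Complex.re (hρ j)
    have e1 : (Module.finrank ℂ (V j) : ℂ)⁻¹ = (((Module.finrank ℂ (V j) : ℝ)⁻¹ : ℝ) : ℂ) := by
      push_cast; rfl
    rw [e1, Complex.re_ofReal_mul, Complex.ofReal_re, Complex.re_sum] at h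
    rw [h, Finset.sum_filter]
    have := (hdR j).ne'
    field_simp
    refine Finset.sum_congr rfl fun g _ => ?_
    split_ifs <;> simp [Complex.mul_re]
  have hSre : S i = (Module.finrank ℂ (V i) : ℝ) * (ρ i - ρ j') := by
    have h1 : (S i : ℂ) = (Module.finrank ℂ (V i) : ℂ) * ((ρ i : ℂ) - (ρ j' : ℂ)) := by
      rw [hS, hρ, hρ]
      have a1 : (Module.finrank ℂ (V i) : ℂ) ≠ 0 := by exact_mod_cast (hd i).ne'
      have a2 : (Module.finrank ℂ (V j') : ℂ) ≠ 0 := by exact_mod_cast (hd j').ne'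
      rw [mul_sub, mul_inv_cancel_left₀ a1, ← mul_assoc, Finset.mul_sum, ← Finset.sum_sub_distrib]
      refine Finset.sum_congr rfl fun g _ => ?_
      ring
    exact_mod_cast h1
  -- first-order expansion of each multiplicity
  set z : Fin s → ℕ → ℝ := fun j n =>
    ((m j n : ℝ) / (Module.finrank ℂ (V j) : ℝ) - (c 1 n : ℝ) / (Fintype.card G : ℝ)) / A n with hz
  have hlim : ∀ j, Tendsto (z j) L (𝓝 (ρ j / (Fintype.card G : ℝ))) := by
    intro j
    have hterm : ∀ g : G, Tendsto (fun n => if g = 1 then (0 : ℝ) else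
        ((V j).character g).re * (c g n : ℝ) / A n) L
        (𝓝 (if orderOf g = e2 then ((V j).character g).re * (ε g : ℝ) else 0)) := by
      intro g
      by_cases hg : g = 1
      · subst hg
        simp only [if_true, orderOf_one, if_neg (Ne.symm he2one)]
        exact tendsto_const_nhds
      · have hle : e2 ≤ orderOf g := he2.2 ⟨g, hg, rfl⟩
        simp only [hg, if_false]
        by_cases ho : orderOf g = e2
        · simp only [ho, if_true]
          have h0 := (hord2 g ho).tendsto_div_nhds_zero
          have h1 := (h0.add_const (ε g : ℝ)).const_mul ((V j).character g).re
          rw [zero_add] at h1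
          refine h1.congr' ?_
          filter_upwards [hApos] with n hn
          change _ * (((c g n : ℝ) - (ε g : ℝ) * A n) / A n + _) = _
          field_simp
          ring
        · simp only [ho, if_false]
          have h0 := (hhigher g (lt_of_le_of_ne hle (Ne.symm ho))).tendsto_div_nhds_zero
          have h1 := h0.const_mul ((V j).character g).re
          rw [mul_zero] at h1
          refine h1.congr fun n => ?_
          rw [mul_div_assoc]
    have hsum := tendsto_finsetSum Finset.univ (fun g _ => hterm g)
    rw [← hρre j] at hsum
    have h2 := hsum.const_mul ((Fintype.card G : ℝ)⁻¹ * (Module.finrank ℂ (V j) : ℝ)⁻¹)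
    have e3 : (Fintype.card G : ℝ)⁻¹ * (Module.finrank ℂ (V j) : ℝ)⁻¹ *
        (ρ j * (Module.finrank ℂ (V j) : ℝ)) = ρ j / (Fintype.card G : ℝ) := by
      have := (hdR j).ne'
      field_simp
    rw [e3] at h2
    refine h2.congr' ?_
    filter_upwards [hApos] with n hn
    have h1 : ((V j).character 1).re = (Module.finrank ℂ (V j) : ℝ) := by
      rw [FDRep.char_one]; simp
    have hs1 : ∑ g : G, (if g = 1 then (0 : ℝ) else
        ((V j).character g).re * (c g n : ℝ) / A n) =
        (∑ g : G, ((V j).character g).re * (c g n : ℝ)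
          - (Module.finrank ℂ (V j) : ℝ) * (c 1 n : ℝ)) / A n := by
      rw [← h1, ← Finset.add_sum_erase Finset.univ
        (fun g => ((V j).character g).re * (c g n : ℝ)) (Finset.mem_univ (1 : G)),
        ← Finset.add_sum_erase Finset.univ _ (Finset.mem_univ (1 : G))]
      simp only [if_true, zero_add, add_sub_cancel_left]
      rw [Finset.sum_div]
      refine Finset.sum_congr rfl fun g hg => ?_
      rw [if_neg (Finset.ne_of_mem_erase hg)]
    rw [hs1, hz]
    simp only [hmre j n]
    have := (hdR j).ne'
    have := hcard.ne'
    field_simp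
  have hne : (Finset.univ : Finset (Fin s)).Nonempty :=
    Finset.univ_nonempty_iff.mpr (Fin.pos_iff_nonempty.mp hs)
  have hinf : Tendsto (fun n => Finset.univ.inf' hne (fun j => z j n)) L
      (𝓝 (ρ j' / (Fintype.card G : ℝ))) := by
    have h := Filter.Tendsto.finset_inf'_nhds_apply hne (fun j _ => hlim j)
    have e : Finset.univ.inf' hne (fun j => ρ j / (Fintype.card G : ℝ)) =
        ρ j' / (Fintype.card G : ℝ) := by
      apply le_antisymm
      · exact Finset.inf'_le (fun j => ρ j / (Fintype.card G : ℝ)) (Finset.mem_univ j')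
      · refine Finset.le_inf' hne _ fun j _ => ?_
        exact div_le_div_of_nonneg_right (hj' j) hcard.le
    rw [e] at h
    exact h
  have hinvA : Tendsto (fun n => 1 / A n) L (𝓝 0) := by
    simp only [one_div]
    exact htop.inv_tendsto_atTop
  have hr : Tendsto (fun n => ((r1 n : ℝ) - (c 1 n : ℝ) / (Fintype.card G : ℝ)) / A n) L
      (𝓝 (ρ j' / (Fintype.card G : ℝ))) := by
    have hlow := hinf.sub hinvA
    rw [sub_zero] at hlow
    refine tendsto_of_tendsto_of_tendsto_of_le_of_le' hlow hinf ?_ ?_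
    · filter_upwards [hApos] with n hn
      obtain ⟨j0, -, h0⟩ := Finset.exists_mem_eq_inf' hne
        (fun j : Fin s => m j n / Module.finrank ℂ (V j))
      have h1 : r1 n = m j0 n / Module.finrank ℂ (V j0) := (hr1 n).trans h0
      have h2 : (m j0 n : ℝ) / (Module.finrank ℂ (V j0) : ℝ) ≤ (r1 n : ℝ) + 1 := by
        rw [div_le_iff₀ (hdR j0)]
        have := (Nat.lt_mul_of_div_lt (h1 ▸ Nat.lt_succ_self (r1 n)) (hd j0)).le
        rw [← h1] at this
        exact_mod_cast this
      have h3 : Finset.univ.inf' hne (fun j => z j n) ≤ z j0 n :=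
        Finset.inf'_le (fun j => z j n) (Finset.mem_univ j0)
      refine (sub_le_sub_right h3 _).trans ?_
      rw [hz]
      simp only
      rw [← sub_div]
      exact div_le_div_of_nonneg_right (by linarith) hn.le
    · filter_upwards [hApos] with n hn
      refine Finset.le_inf' hne _ fun j _ => ?_
      have h1 : r1 n ≤ m j n / Module.finrank ℂ (V j) := by
        rw [hr1 n]
        exact Finset.inf'_le (fun j : Fin s => m j n / Module.finrank ℂ (V j)) (Finset.mem_univ j)
      have h2 : (r1 n : ℝ) ≤ (m j n : ℝ) / (Module.finrank ℂ (V j) : ℝ) :=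
        (Nat.cast_le.mpr h1).trans Nat.cast_div_le
      exact div_le_div_of_nonneg_right (by linarith) hn.le
  have hfin := ((hlim i).sub hr).const_mul
    ((Module.finrank ℂ (V i) : ℝ) * (Fintype.card G : ℝ) / S i)
  have e4 : (Module.finrank ℂ (V i) : ℝ) * (Fintype.card G : ℝ) / S i *
      (ρ i / (Fintype.card G : ℝ) - ρ j' / (Fintype.card G : ℝ)) = 1 := by
    have := hcard.ne'
    have e5 : (Module.finrank ℂ (V i) : ℝ) * (Fintype.card G : ℝ) / S i *
      (ρ i / (Fintype.card G : ℝ) - ρ j' / (Fintype.card G : ℝ)) =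
      ((Module.finrank ℂ (V i) : ℝ) * (ρ i - ρ j')) / S i := by
      field_simp
    rw [e5, ← hSre, div_self hSi]
  rw [e4] at hfin
  refine hfin.congr' ?_
  filter_upwards [hApos] with n hn
  change _ = (m' i n : ℝ) / (A n / (Fintype.card G : ℝ) * S i)
  rw [hm', hz]
  push_cast
  have := hcard.ne'
  have := (hdR i).ne'
  have := hn.ne'
  field_simp
  ring
end

section
/- Under the stated second-order growth hypotheses along the arithmetic progression n ≡ n_0 (mod N), for all sufficiently large n ≡ n_0 (mod N), every index j that minimizes ⌊ m_j(n) / dim χ_j ⌋ over 1 ≤ j ≤ s also minimizes the quantity ρ_j := (1/dim χ_j) · Σ_{g ∈ G, ord g = e_2} χ_j(g)·ε(g) over 1 ≤ j ≤ s. -/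
open CategoryTheory Filter Asymptotics
open scoped Topology BigOperators

theorem finrank_pos_of_simple_fdrep {G : Type} [Group G] [Fintype G] (W : FDRep ℂ G)
    (h : Simple W) : 0 < Module.finrank ℂ W := by
  by_contra h0
  have h0 : Module.finrank ℂ W = 0 := by omega
  have : Subsingleton W := Module.finrank_zero_iff.1 h0
  apply id_nonzero W
  ext x
  exact Subsingleton.elim (α := W) _ _

/-- `G` is a finite group, `V 1, …, V s` a complete list of the pairwise
non-isomorphic irreducible complex representations of `G` with characters `χ i`, `c g n` an
integer-valued class function of `g` realized as the character of a representation `K n`, and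
`m i n` the multiplicity of `V i` in `K n`.  `e2` is the least order of a non-identity element.
Under the second-order growth hypotheses along the arithmetic progression `n ≡ n0 (mod N)`
(signs `ε` constant on conjugacy classes, `c g n = ε g · C(n,e2)·exp(D(n)/e2)·(1+o(1))` for
`ord g = e2`, `c g n = o(C(n,e2)·exp(D(n)/e2))` for `ord g > e2`, and
`C(n,e2)·exp(D(n)/e2) → ∞`), for all sufficiently large `n ≡ n0 (mod N)` every index `j1` that
minimizes `⌊m_j(n)/dim χ_j⌋` over `1 ≤ j ≤ s` also minimizes
`ρ_j = (1/dim χ_j)·Σ_{ord g = e2} χ_j(g)·ε(g)` over `1 ≤ j ≤ s`. -/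
theorem moonshine_floor_minimizer_eq_rho_minimizer
    (G : Type) [Group G] [Fintype G]
    (s : ℕ) (hs : 0 < s) (V : Fin s → FDRep ℂ G)
    (hsimple : ∀ i, Simple (V i))
    (hdistinct : ∀ i j, i ≠ j → IsEmpty (V i ≅ V j))
    (hcomplete : ∀ W : FDRep ℂ G, Simple W → ∃ i, Nonempty (W ≅ V i))
    (c : G → ℕ → ℤ)
    (hclass : ∀ g h : G, IsConj g h → c g = c h)
    (K : ℕ → FDRep ℂ G)
    (hK : ∀ (n : ℕ) (g : G), (K n).character g = (c g n : ℂ))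
    (m : Fin s → ℕ → ℕ)
    (hm : ∀ i n, (m i n : ℂ) =
      (Fintype.card G : ℂ)⁻¹ * ∑ g : G, (starRingEnd ℂ) ((V i).character g) * (c g n : ℂ))
    (e2 : ℕ) (he2 : IsLeast {k : ℕ | ∃ g : G, g ≠ 1 ∧ orderOf g = k} e2)
    (N : ℕ) (hN : 1 ≤ N) (n0 : ℕ)
    (L : Filter ℕ) (hL : L = atTop ⊓ 𝓟 {n : ℕ | n % N = n0 % N})
    (ε : G → ℤ) (hε : ∀ g, ε g = 1 ∨ ε g = -1)
    (hεclass : ∀ g h : G, IsConj g h → ε g = ε h)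
    (C : ℕ → ℕ → ℝ) (D : ℕ → ℝ)
    (hord2 : ∀ g : G, orderOf g = e2 →
      (fun n => (c g n : ℝ) - (ε g : ℝ) * (C n e2 * Real.exp (D n / (e2 : ℝ))))
        =o[L] fun n => C n e2 * Real.exp (D n / (e2 : ℝ)))
    (hhigher : ∀ g : G, e2 < orderOf g →
      (fun n => (c g n : ℝ)) =o[L] fun n => C n e2 * Real.exp (D n / (e2 : ℝ)))
    (htop : Tendsto (fun n => C n e2 * Real.exp (D n / (e2 : ℝ))) L atTop)
    (ρ : Fin s → ℝ)
    (hρ : ∀ j, (ρ j : ℂ) = (Module.finrank ℂ (V j) : ℂ)⁻¹ *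
      ∑ g ∈ Finset.univ.filter (fun g : G => orderOf g = e2),
        (V j).character g * (ε g : ℂ))
    :
    ∀ᶠ n in L, ∀ j1 : Fin s,
      (∀ j : Fin s, m j1 n / Module.finrank ℂ (V j1) ≤ m j n / Module.finrank ℂ (V j)) →
      ∀ j : Fin s, ρ j1 ≤ ρ j := by
  classical
  set F : ℕ → ℝ := fun n => C n e2 * Real.exp (D n / (e2 : ℝ)) with hF
  have hd : ∀ j, 0 < Module.finrank ℂ (V j) := fun j => finrank_pos_of_simple_fdrep (V j) (hsimple j)
  have hG : (0 : ℝ) < Fintype.card G := by exact_mod_cast Fintype.card_pos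
  have h1 : orderOf (1 : G) ≠ e2 := by
    obtain ⟨g, hg, hge⟩ := he2.1
    intro h
    rw [orderOf_one] at h
    exact hg (orderOf_eq_one_iff.1 (hge.trans h.symm))
  -- the error term
  set t : G → ℕ → ℝ := fun g n =>
    if orderOf g = e2 then (c g n : ℝ) - (ε g : ℝ) * F n else if g = 1 then 0 else (c g n : ℝ) with ht
  have hto : ∀ g, t g =o[L] F := by
    intro g
    by_cases hg : orderOf g = e2
    · simpa [ht, hg] using hord2 g hg
    · by_cases hg1 : g = 1
      · have : t g = fun _ => 0 := by
          funext n
          simp only [ht]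
          rw [if_neg hg, if_pos hg1]
        rw [this]
        exact isLittleO_zero _ _
      · have : t g = fun n => (c g n : ℝ) := by
          funext n
          simp only [ht]
          rw [if_neg hg, if_neg hg1]
        rw [this]
        exact hhigher g (lt_of_le_of_ne (he2.2 ⟨g, hg1, rfl⟩) (Ne.symm hg))
  set r : Fin s → ℕ → ℝ := fun j n =>
    (m j n : ℝ) / Module.finrank ℂ (V j) * Fintype.card G - c 1 n - ρ j * F n with hr
  have hrc : ∀ j n, ((r j n : ℝ) : ℂ) = (Module.finrank ℂ (V j) : ℂ)⁻¹ *
      ∑ g : G, (starRingEnd ℂ) ((V j).character g) * ((t g n : ℝ) : ℂ) := by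
    intro j n
    have hdc : (Module.finrank ℂ (V j) : ℂ) ≠ 0 := by exact_mod_cast (hd j).ne'
    have hGc : (Fintype.card G : ℂ) ≠ 0 := by exact_mod_cast hG.ne'
    have hρ' : (ρ j : ℂ) = (Module.finrank ℂ (V j) : ℂ)⁻¹ *
      ∑ g : G, if orderOf g = e2 then (starRingEnd ℂ) ((V j).character g) * (ε g : ℂ) else 0 := by
      have := congrArg (starRingEnd ℂ) (hρ j)
      rw [Complex.conj_ofReal] at this
      rw [this, Finset.sum_filter]
      simp [map_sum, apply_ite]
    have hsplit : ∑ g : G, (starRingEnd ℂ) ((V j).character g) * (c g n : ℂ) =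
        ∑ g : G, (starRingEnd ℂ) ((V j).character g) * ((t g n : ℝ) : ℂ)
        + (∑ g : G, if orderOf g = e2 then (starRingEnd ℂ) ((V j).character g) * (ε g : ℂ) else 0) * F n
        + ∑ g : G, if g = 1 then (Module.finrank ℂ (V j) : ℂ) * c 1 n else 0 := by
      rw [Finset.sum_mul, ← Finset.sum_add_distrib, ← Finset.sum_add_distrib]
      refine Finset.sum_congr rfl fun g _ => ?_
      simp only [ht]
      by_cases hg1 : g = 1
      · subst hg1
        rw [if_neg h1, if_neg h1, if_pos rfl, if_pos rfl, FDRep.char_one]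
        simp
      · by_cases hg : orderOf g = e2
        · rw [if_pos hg, if_pos hg, if_neg hg1]
          push_cast
          ring
        · rw [if_neg hg, if_neg hg, if_neg hg1, if_neg hg1]
          push_cast
          ring
    rw [Finset.sum_ite_eq' Finset.univ (1 : G)] at hsplit
    simp only [Finset.mem_univ, if_true] at hsplit
    simp only [hr]
    push_cast
    rw [hm, hsplit, hρ']
    field_simp
    ring
  have hro : ∀ j, r j =o[L] F := by
    intro j
    refine Complex.isLittleO_ofReal_left.1 ?_
    simp only [hrc]
    refine IsLittleO.const_mul_left ?_ _
    apply IsLittleO.fun_sum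
    intro g _
    exact IsLittleO.const_mul_left (Complex.isLittleO_ofReal_left.2 (hto g)) _
  have key : ∀ j1 j : Fin s, ∀ᶠ n in L,
      m j1 n / Module.finrank ℂ (V j1) ≤ m j n / Module.finrank ℂ (V j) → ρ j1 ≤ ρ j := by
    intro j1 j
    by_cases hlt : ρ j1 ≤ ρ j
    · exact Eventually.of_forall fun _ _ => hlt
    push Not at hlt
    have hδ : 0 < (ρ j1 - ρ j) / 4 := by linarith
    filter_upwards [(hro j1).bound hδ, (hro j).bound hδ, htop.eventually_gt_atTop 0,
      htop.eventually_gt_atTop (Fintype.card G * (2 / (ρ j1 - ρ j)))] with n b1 b2 hF0 hFb hfl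
    exfalso
    change 0 < F n at hF0
    change _ < F n at hFb
    rw [Real.norm_eq_abs, Real.norm_eq_abs, abs_of_pos hF0] at b1 b2
    have b1 := (abs_le.1 b1).1
    have b2 := (abs_le.1 b2).2
    simp only [hr] at b1 b2
    have hq : (m j1 n : ℝ) / Module.finrank ℂ (V j1) < (m j n : ℝ) / Module.finrank ℂ (V j) + 1 := by
      have e1 : (m j1 n : ℝ) / Module.finrank ℂ (V j1) <
          ((m j1 n / Module.finrank ℂ (V j1) : ℕ) : ℝ) + 1 := by
        rw [div_lt_iff₀ (by exact_mod_cast hd j1)]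
        have := Nat.lt_mul_div_succ (m j1 n) (hd j1)
        rw [mul_comm] at this
        exact_mod_cast this
      have e2 : ((m j n / Module.finrank ℂ (V j) : ℕ) : ℝ) ≤ (m j n : ℝ) / Module.finrank ℂ (V j) :=
        Nat.cast_div_le
      have e3 : ((m j1 n / Module.finrank ℂ (V j1) : ℕ) : ℝ) ≤
        ((m j n / Module.finrank ℂ (V j) : ℕ) : ℝ) := by exact_mod_cast hfl
      linarith
    have hq2 := mul_lt_mul_of_pos_right hq hG
    have hFb' : (Fintype.card G : ℝ) * 2 < F n * (ρ j1 - ρ j) := by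
      rw [← mul_div_assoc, div_lt_iff₀ (by linarith)] at hFb
      exact hFb
    nlinarith
  have hall := eventually_all.2 fun j1 => eventually_all.2 fun j => key j1 j
  filter_upwards [hall] with n hn j1 hj j
  exact hn j1 j (hj j)
end
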